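/- Let C be a nonempty bounded, closed and convex subset of a real Hilbert space H and let F : C × C → C satisfy ‖F(x,y) − F(u,v)‖ ≤ (1/2)(‖x − u‖ + ‖y − v‖) for all x, y, u, v ∈ C, and suppose F is demicompact. Then for every λ ∈ (0,1) and every x₀ ∈ C, the sequence defined by xₙ₊₁ = λxₙ + (1−λ)F(xₙ, xₙ) converges strongly to some q ∈ C with F(q,q) = q. -/

import Mathlib

open Filter Topology

/-!
Only the diagonal map `T x = F x x` matters: it is nonexpansive and demicompact. Write
`y n = T (x n)`, so that `x (n + 1) = l • x n + (1 - l) • y n`. The residuals `‖y n - x n‖` decrease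
to some `r ≥ 0`. Letting `i → ∞` in the Goebel–Kirk inequality gives `(1 + n * (1 - l)) * r ≤ D`,
where `D` bounds all `‖y j - x i‖`; as `n` is arbitrary, `r = 0` (Ishikawa).
Demicompactness now yields a cluster point `q` of `x`, which is fixed by `T`, and since `‖x n - q‖`
is antitone the whole sequence converges to `q`.
-/

section Averaging

variable {E : Type*} [SeminormedAddCommGroup E] [NormedSpace ℝ E] {l : ℝ} {x y : ℕ → E}

lemma norm_averaging_succ_sub (hl1 : l ≤ 1) (hx : ∀ n, x (n + 1) = l • x n + (1 - l) • y n)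
    (n : ℕ) : ‖x (n + 1) - x n‖ = (1 - l) * ‖y n - x n‖ := by
  have hdiff : x (n + 1) - x n = (1 - l) • (y n - x n) := by
    rw [hx]
    module
  rw [hdiff, norm_smul_of_nonneg (sub_nonneg.2 hl1)]

lemma antitone_norm_averaging_residual (hl0 : 0 ≤ l) (hl1 : l ≤ 1)
    (hx : ∀ n, x (n + 1) = l • x n + (1 - l) • y n)
    (hy : ∀ n, ‖y (n + 1) - y n‖ ≤ ‖x (n + 1) - x n‖) :
    Antitone fun n => ‖y n - x n‖ := by
  refine antitone_nat_of_succ_le fun n => ?_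
  calc ‖y (n + 1) - x (n + 1)‖ = ‖(y (n + 1) - y n) + l • (y n - x n)‖ := by
        rw [hx]
        congr 1
        module
    _ ≤ ‖y (n + 1) - y n‖ + l * ‖y n - x n‖ :=
        (norm_add_le _ _).trans_eq (by rw [norm_smul_of_nonneg hl0])
    _ ≤ (1 - l) * ‖y n - x n‖ + l * ‖y n - x n‖ := by
        gcongr
        exact (hy n).trans_eq (norm_averaging_succ_sub hl1 hx n)
    _ = ‖y n - x n‖ := by ring

lemma norm_averaging_target_sub_le (hl0 : 0 ≤ l) (hl1 : l ≤ 1)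
    (hx : ∀ n, x (n + 1) = l • x n + (1 - l) • y n)
    (hy : ∀ n, ‖y (n + 1) - y n‖ ≤ ‖x (n + 1) - x n‖) (i n : ℕ) :
    ‖y (i + n) - y i‖ ≤ n * ((1 - l) * ‖y i - x i‖) := by
  induction n with
  | zero => simp
  | succ n ih =>
    have hstep : ‖y (i + n + 1) - y (i + n)‖ ≤ (1 - l) * ‖y i - x i‖ :=
      calc ‖y (i + n + 1) - y (i + n)‖ ≤ (1 - l) * ‖y (i + n) - x (i + n)‖ :=
            (hy _).trans_eq (norm_averaging_succ_sub hl1 hx _)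
        _ ≤ (1 - l) * ‖y i - x i‖ :=
            mul_le_mul_of_nonneg_left
              (antitone_norm_averaging_residual hl0 hl1 hx hy (Nat.le_add_right i n))
              (sub_nonneg.2 hl1)
    calc ‖y (i + (n + 1)) - y i‖ ≤ ‖y (i + n + 1) - y (i + n)‖ + ‖y (i + n) - y i‖ :=
          norm_sub_le_norm_sub_add_norm_sub _ _ _
      _ ≤ (1 - l) * ‖y i - x i‖ + n * ((1 - l) * ‖y i - x i‖) := add_le_add hstep ih
      _ = (n + 1 : ℕ) * ((1 - l) * ‖y i - x i‖) := by
          push_cast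
          ring

lemma pow_mul_one_add_mul_one_sub_le_one (hl0 : 0 ≤ l) (hl2 : l ≤ 2) (n : ℕ) :
    l ^ n * (1 + n * (1 - l)) ≤ 1 :=
  calc l ^ n * (1 + n * (1 - l)) ≤ l ^ n * (1 + (1 - l)) ^ n := by
        gcongr
        exact one_add_mul_le_pow (by linarith) n
    _ = (l * (1 + (1 - l))) ^ n := (mul_pow _ _ _).symm
    _ ≤ 1 := pow_le_one₀ (mul_nonneg hl0 (by linarith)) (by nlinarith [sq_nonneg (1 - l)])

theorem goebel_kirk_inequality (hl0 : 0 ≤ l) (hl1 : l ≤ 1)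
    (hx : ∀ n, x (n + 1) = l • x n + (1 - l) • y n)
    (hy : ∀ n, ‖y (n + 1) - y n‖ ≤ ‖x (n + 1) - x n‖) (i n : ℕ) :
    l ^ n * (1 + n * (1 - l)) * ‖y i - x i‖ ≤
      l ^ n * ‖y (i + n) - x i‖ + (‖y i - x i‖ - ‖y (i + n) - x (i + n)‖) := by
  have hl1' : 0 ≤ 1 - l := sub_nonneg.2 hl1
  induction n generalizing i with
  | zero => simp
  | succ n ih =>
    have hsplit : ‖y (i + (n + 1)) - x (i + 1)‖ ≤
        l * ‖y (i + (n + 1)) - x i‖ + (1 - l) * ((n + 1) * ((1 - l) * ‖y i - x i‖)) :=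
      calc ‖y (i + (n + 1)) - x (i + 1)‖
          = ‖l • (y (i + (n + 1)) - x i) + (1 - l) • (y (i + (n + 1)) - y i)‖ := by
            rw [hx]
            congr 1
            module
        _ ≤ l * ‖y (i + (n + 1)) - x i‖ + (1 - l) * ‖y (i + (n + 1)) - y i‖ :=
            (norm_add_le _ _).trans_eq
              (by rw [norm_smul_of_nonneg hl0, norm_smul_of_nonneg hl1'])
        _ ≤ _ := by
            gcongr
            exact_mod_cast norm_averaging_target_sub_le hl0 hl1 hx hy i (n + 1)
    have hresidual : (1 - l ^ n * (1 + n * (1 - l))) * ‖y (i + 1) - x (i + 1)‖ ≤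
        (1 - l ^ n * (1 + n * (1 - l))) * ‖y i - x i‖ :=
      mul_le_mul_of_nonneg_left
        (antitone_norm_averaging_residual hl0 hl1 hx hy i.le_succ)
        (sub_nonneg.2 (pow_mul_one_add_mul_one_sub_le_one hl0 (by linarith) n))
    have hshift := ih (i + 1)
    rw [add_assoc i 1 n, add_comm 1 n] at hshift
    have hscaled := mul_le_mul_of_nonneg_left hsplit (pow_nonneg hl0 n)
    push_cast
    linear_combination hshift + hscaled + hresidual

lemma exists_norm_averaging_target_sub_le (hl0 : 0 ≤ l) (hl1 : l ≤ 1)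
    (hx : ∀ n, x (n + 1) = l • x n + (1 - l) • y n)
    (hy : ∀ n, ‖y (n + 1) - y n‖ ≤ ‖x (n + 1) - x n‖)
    (hbdd : Bornology.IsBounded (Set.range x)) :
    ∃ D, ∀ i j, ‖y j - x i‖ ≤ D := by
  obtain ⟨R, hR⟩ := Metric.isBounded_iff.1 hbdd
  refine ⟨‖y 0 - x 0‖ + R, fun i j => ?_⟩
  calc ‖y j - x i‖ ≤ ‖y j - x j‖ + ‖x j - x i‖ := norm_sub_le_norm_sub_add_norm_sub _ _ _
    _ ≤ ‖y 0 - x 0‖ + R :=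
        add_le_add (antitone_norm_averaging_residual hl0 hl1 hx hy j.zero_le)
          ((dist_eq_norm _ _).symm.trans_le (hR ⟨j, rfl⟩ ⟨i, rfl⟩))

theorem tendsto_averaging_residual_zero (hl0 : 0 < l) (hl1 : l < 1)
    (hx : ∀ n, x (n + 1) = l • x n + (1 - l) • y n)
    (hy : ∀ n, ‖y (n + 1) - y n‖ ≤ ‖x (n + 1) - x n‖)
    (hbdd : Bornology.IsBounded (Set.range x)) :
    Tendsto (fun n => y n - x n) atTop (𝓝 0) := by
  obtain ⟨D, hD⟩ := exists_norm_averaging_target_sub_le hl0.le hl1.le hx hy hbdd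
  obtain ⟨r, hr⟩ : ∃ r, Tendsto (fun n => ‖y n - x n‖) atTop (𝓝 r) :=
    ⟨_, tendsto_atTop_ciInf (antitone_norm_averaging_residual hl0.le hl1.le hx hy)
      ⟨0, by rintro _ ⟨n, rfl⟩; exact norm_nonneg _⟩⟩
  have hr0 : 0 ≤ r := ge_of_tendsto' hr fun n => norm_nonneg _
  have hbound (n : ℕ) : (1 + n * (1 - l)) * r ≤ D := by
    have hlim : l ^ n * (1 + n * (1 - l)) * r ≤ l ^ n * D + (r - r) :=
      le_of_tendsto_of_tendsto' (hr.const_mul _)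
        ((hr.sub (hr.comp (tendsto_add_atTop_nat n))).const_add _) fun i =>
        (goebel_kirk_inequality hl0.le hl1.le hx hy i n).trans
          (add_le_add (mul_le_mul_of_nonneg_left (hD i (i + n)) (pow_nonneg hl0.le n)) le_rfl)
    rw [sub_self, add_zero, mul_assoc] at hlim
    exact le_of_mul_le_mul_left hlim (pow_pos hl0 n)
  have hr_zero : r = 0 := by
    by_contra hne
    have hpos : 0 < (1 - l) * r := mul_pos (sub_pos.2 hl1) (hr0.lt_of_ne' hne)
    obtain ⟨n, hn⟩ := exists_nat_gt (D / ((1 - l) * r))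
    rw [div_lt_iff₀ hpos] at hn
    linarith [hbound n]
  exact tendsto_zero_iff_norm_tendsto_zero.2 (hr_zero ▸ hr)

end Averaging

section Demicompact

variable {E : Type*} [SeminormedAddCommGroup E] {C : Set E}

/-- Demicompactness of a map `T` on `C` (Petryshyn): a bounded sequence in `C` along which
`T - id` converges has a convergent subsequence. The limit is not required to lie in `C`. -/
def DemicompactOn (T : E → E) (C : Set E) : Prop :=
  ∀ u : ℕ → E, (∀ n, u n ∈ C) → Bornology.IsBounded (Set.range u) →
    (∃ s, Tendsto (fun n => T (u n) - u n) atTop (𝓝 s)) →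
    ∃ φ : ℕ → ℕ, StrictMono φ ∧ ∃ q, Tendsto (u ∘ φ) atTop (𝓝 q)

/-- Nonexpansiveness on `C × C` of a map of two variables; the factor `1 / 2` is the one for
which the diagonal `x ↦ F x x` is nonexpansive. -/
def CoupledNonexpansiveOn (F : E → E → E) (C : Set E) : Prop :=
  ∀ x ∈ C, ∀ y ∈ C, ∀ u ∈ C, ∀ v ∈ C, ‖F x y - F u v‖ ≤ (1 / 2) * (‖x - u‖ + ‖y - v‖)

/-- Demicompactness on `C × C` of a map of two variables: the analogue of `DemicompactOn` for
the coupled system `F u v = u`, `F v u = v`. -/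
def CoupledDemicompactOn (F : E → E → E) (C : Set E) : Prop :=
  ∀ u v : ℕ → E, (∀ n, u n ∈ C) → (∀ n, v n ∈ C) →
    Bornology.IsBounded (Set.range u) → Bornology.IsBounded (Set.range v) →
    (∃ su, Tendsto (fun n => F (u n) (v n) - u n) atTop (𝓝 su)) →
    (∃ sv, Tendsto (fun n => F (v n) (u n) - v n) atTop (𝓝 sv)) →
    ∃ φ : ℕ → ℕ, StrictMono φ ∧ ∃ u₀ v₀,
      Tendsto (u ∘ φ) atTop (𝓝 u₀) ∧ Tendsto (v ∘ φ) atTop (𝓝 v₀)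

lemma CoupledNonexpansiveOn.lipschitzOnWith_diag {F : E → E → E}
    (hF : CoupledNonexpansiveOn F C) : LipschitzOnWith 1 (fun x => F x x) C :=
  LipschitzOnWith.of_dist_le_mul fun x hx y hy => by
    rw [NNReal.coe_one, dist_eq_norm, dist_eq_norm]
    linarith [hF x hx x hx y hy y hy]

lemma CoupledDemicompactOn.demicompactOn_diag {F : E → E → E}
    (hF : CoupledDemicompactOn F C) : DemicompactOn (fun x => F x x) C := by
  intro u hu hbdd hres
  obtain ⟨φ, hφ, q, -, hq, -⟩ := hF u u hu hu hbdd hbdd hres hres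
  exact ⟨φ, hφ, q, hq⟩

end Demicompact

section Krasnoselskij

lemma krasnoselskij_mem {E : Type*} [AddCommGroup E] [Module ℝ E] {C : Set E} {T : E → E}
    {x : ℕ → E} {l : ℝ} (hconv : Convex ℝ C) (hmaps : Set.MapsTo T C C) (hl0 : 0 ≤ l)
    (hl1 : l ≤ 1) (hx0 : x 0 ∈ C) (hx : ∀ n, x (n + 1) = l • x n + (1 - l) • T (x n)) (n : ℕ) :
    x n ∈ C := by
  induction n with
  | zero => exact hx0
  | succ n ih =>
    rw [hx]
    exact hconv ih (hmaps ih) hl0 (sub_nonneg.2 hl1) (add_sub_cancel l 1)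

lemma antitone_dist_krasnoselskij_fixedPoint {E : Type*} [SeminormedAddCommGroup E]
    [NormedSpace ℝ E] {C : Set E} {T : E → E} {x : ℕ → E} {l : ℝ}
    (hT : LipschitzOnWith 1 T C) (hl0 : 0 ≤ l) (hl1 : l ≤ 1) (hxC : ∀ n, x n ∈ C)
    (hx : ∀ n, x (n + 1) = l • x n + (1 - l) • T (x n)) {q : E} (hqC : q ∈ C) (hq : T q = q) :
    Antitone fun n => dist (x n) q := by
  refine antitone_nat_of_succ_le fun n => ?_
  have hTx : T (x n) ∈ Metric.closedBall q (dist (x n) q) := by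
    simpa [hq] using hT.dist_le_mul (x n) (hxC n) q hqC
  rw [hx]
  exact convex_closedBall q _ (Metric.mem_closedBall.2 le_rfl) hTx hl0 (sub_nonneg.2 hl1)
    (add_sub_cancel l 1)

variable {E : Type*} [NormedAddCommGroup E] {C : Set E} {T : E → E} {x : ℕ → E}

lemma DemicompactOn.exists_fixedPoint_tendsto_subseq (hdemi : DemicompactOn T C)
    (hcl : IsClosed C) (hT : ContinuousOn T C) (hxC : ∀ n, x n ∈ C)
    (hbdd : Bornology.IsBounded (Set.range x))
    (hres : Tendsto (fun n => T (x n) - x n) atTop (𝓝 0)) :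
    ∃ q ∈ C, T q = q ∧ ∃ φ : ℕ → ℕ, StrictMono φ ∧ Tendsto (x ∘ φ) atTop (𝓝 q) := by
  obtain ⟨φ, hφ, q, hq⟩ := hdemi x hxC hbdd ⟨0, hres⟩
  have hqC : q ∈ C := hcl.mem_of_tendsto hq (Eventually.of_forall fun n => hxC (φ n))
  have hTq : Tendsto (fun n => T (x (φ n))) atTop (𝓝 (T q)) :=
    (hT q hqC).tendsto.comp
      (tendsto_nhdsWithin_iff.2 ⟨hq, Eventually.of_forall fun n => hxC (φ n)⟩)
  have hTq' : Tendsto (fun n => T (x (φ n))) atTop (𝓝 q) := by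
    simpa using (hres.comp hφ.tendsto_atTop).add hq
  exact ⟨q, hqC, tendsto_nhds_unique hTq hTq', φ, hφ, hq⟩

theorem krasnoselskij_strong_convergence_nonexpansive_demicompact_general
    [NormedSpace ℝ E] {l : ℝ}
    (hcl : IsClosed C) (hconv : Convex ℝ C) (hmaps : Set.MapsTo T C C)
    (hT : LipschitzOnWith 1 T C) (hdemi : DemicompactOn T C) (hl0 : 0 < l) (hl1 : l < 1)
    (hx0 : x 0 ∈ C) (hx : ∀ n, x (n + 1) = l • x n + (1 - l) • T (x n))
    (hbdd : Bornology.IsBounded (Set.range x)) :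
    ∃ q ∈ C, T q = q ∧ Tendsto x atTop (𝓝 q) := by
  have hxC := krasnoselskij_mem hconv hmaps hl0.le hl1.le hx0 hx
  have hTx (n : ℕ) : ‖T (x (n + 1)) - T (x n)‖ ≤ ‖x (n + 1) - x n‖ := by
    simpa [dist_eq_norm] using hT.dist_le_mul _ (hxC (n + 1)) _ (hxC n)
  have hres := tendsto_averaging_residual_zero hl0 hl1 hx hTx hbdd
  obtain ⟨q, hqC, hq, φ, hφ, hlim⟩ :=
    hdemi.exists_fixedPoint_tendsto_subseq hcl hT.continuousOn hxC hbdd hres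
  have hanti := antitone_dist_krasnoselskij_fixedPoint hT hl0.le hl1.le hxC hx hqC hq
  refine ⟨q, hqC, hq, tendsto_iff_dist_tendsto_zero.2 ?_⟩
  exact (tendsto_iff_tendsto_subseq_of_antitone hanti hφ.tendsto_atTop).2
    (tendsto_iff_dist_tendsto_zero.1 hlim)

end Krasnoselskij

/-- If `F : C × C → C` is nonexpansive in the sense
`‖F(x,y) − F(u,v)‖ ≤ ½(‖x−u‖ + ‖y−v‖)` and demicompact on a nonempty bounded closed
convex subset `C` of a real Hilbert space, then for every `λ ∈ (0,1)` and `x₀ ∈ C`,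
the Krasnoselskij iteration `xₙ₊₁ = λxₙ + (1−λ)F(xₙ,xₙ)` converges strongly to some
`q ∈ C` with `F(q,q) = q`. -/
theorem krasnoselskij_strong_convergence_nonexpansive_demicompact
    {H : Type*} [NormedAddCommGroup H] [InnerProductSpace ℝ H] [CompleteSpace H]
    (C : Set H) (hne : C.Nonempty) (hbdd : Bornology.IsBounded C)
    (hcl : IsClosed C) (hconv : Convex ℝ C)
    (F : H → H → H) (hmaps : ∀ x ∈ C, ∀ y ∈ C, F x y ∈ C)
    (hF : ∀ x ∈ C, ∀ y ∈ C, ∀ u ∈ C, ∀ v ∈ C,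
      ‖F x y - F u v‖ ≤ (1 / 2) * (‖x - u‖ + ‖y - v‖))
    (hdemi : ∀ u v : ℕ → H, (∀ n, u n ∈ C) → (∀ n, v n ∈ C) →
      Bornology.IsBounded (Set.range u) → Bornology.IsBounded (Set.range v) →
      (∃ su : H, Tendsto (fun n => F (u n) (v n) - u n) atTop (𝓝 su)) →
      (∃ sv : H, Tendsto (fun n => F (v n) (u n) - v n) atTop (𝓝 sv)) →
      ∃ φ : ℕ → ℕ, StrictMono φ ∧ ∃ u₀ v₀ : H,
        Tendsto (u ∘ φ) atTop (𝓝 u₀) ∧ Tendsto (v ∘ φ) atTop (𝓝 v₀)) :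
    ∀ l : ℝ, 0 < l → l < 1 → ∀ x : ℕ → H, x 0 ∈ C →
      (∀ n, x (n + 1) = l • x n + (1 - l) • F (x n) (x n)) →
      ∃ q ∈ C, F q q = q ∧ Tendsto x atTop (𝓝 q) := by
  intro l hl0 hl1 x hx0 hx
  have hmaps_diag : Set.MapsTo (fun y => F y y) C C := fun y hy => hmaps y hy y hy
  have hxC := krasnoselskij_mem hconv hmaps_diag hl0.le hl1.le hx0 hx
  exact krasnoselskij_strong_convergence_nonexpansive_demicompact_general hcl hconv hmaps_diag
    (CoupledNonexpansiveOn.lipschitzOnWith_diag hF)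
    (CoupledDemicompactOn.demicompactOn_diag hdemi) hl0 hl1 hx0 hx
    (hbdd.subset (Set.range_subset_iff.2 hxC))
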